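/- If μ is a compact Carleson measure for 𝓗(Γ,v), then lim_{n→∞} ∫_{Ω_n} v_n/|z−γ_n|² dμ(z) = 0 and lim_{n→∞} ( (∑_{m=1}^{n} v_m)·(∑_{m=n+1}^∞ ∫_{Ω_m} |z|^{-2} dμ(z)) + (∑_{m=n+1}^∞ v_m/|γ_m|²)·(∑_{m=1}^{n} μ(Ω_m)) ) = 0. -/

import Mathlib

open MeasureTheory Filter Topology
open scoped ENNReal NNReal

noncomputable section

/-! Sequences are indexed by `ℕ`, with the Lean index `n : ℕ` corresponding to the
paper's index `n + 1` (so `γ 0` is the paper's `γ_1`, `Omega γ 0` is the paper's `Ω_1`,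
the paper's partial sum `∑_{m=1}^{n} v_m` is `∑ m ∈ Finset.range (n+1), v m`, and the
paper's tail `∑_{m=n+1}^∞ c_m` is `∑' m : ℕ, c (n+1+m)`). -/

/-- The annular shells `Ω_n` (here `Omega γ 0` is the paper's `Ω_1`). -/
def Omega (γ : ℕ → ℂ) : ℕ → Set ℂ
  | 0 => {z : ℂ | ‖z‖ < (‖γ 0‖ + ‖γ 1‖) / 2}
  | n + 1 => {z : ℂ | (‖γ n‖ + ‖γ (n + 1)‖) / 2 ≤ ‖z‖ ∧ ‖z‖ < (‖γ (n + 1)‖ + ‖γ (n + 2)‖) / 2}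

/-- The sparseness condition `inf_n |γ_{n+1}|/|γ_n| > 1`. -/
def Sparse (γ : ℕ → ℂ) : Prop := ∃ c : ℝ, 1 < c ∧ ∀ n, c * ‖γ n‖ ≤ ‖γ (n + 1)‖

/-- The admissibility condition `∑_n v_n/(1+|γ_n|²) < ∞`. -/
def Admissible (γ : ℕ → ℂ) (v : ℕ → ℝ) : Prop :=
  Summable fun n => v n / (1 + ‖γ n‖ ^ 2)

/-- Membership in `ℓ²_v`. -/
def MemL2v (v : ℕ → ℝ) (a : ℕ → ℂ) : Prop := Summable fun n => ‖a n‖ ^ 2 * v n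

/-- The squared norm `‖a‖²_v = ∑_n |a_n|² v_n`. -/
def normSqV (v : ℕ → ℝ) (a : ℕ → ℂ) : ℝ := ∑' n, ‖a n‖ ^ 2 * v n

/-- The set `(Γ,v)* = {z : ∑_n v_n/|z-γ_n|² < ∞}`. -/
def GammaStar (γ : ℕ → ℂ) (v : ℕ → ℝ) : Set ℂ :=
  {z : ℂ | Summable fun n => v n / ‖z - γ n‖ ^ 2}

/-- The function of `𝓗(Γ,v)` with coefficient sequence `a`:
`f(z) = ∑_n a_n v_n/(z-γ_n)`. -/
def Hfun (γ : ℕ → ℂ) (v : ℕ → ℝ) (a : ℕ → ℂ) (z : ℂ) : ℂ :=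
  ∑' n, a n * (v n : ℂ) / (z - γ n)

/-- `μ` is a Carleson measure for `𝓗(Γ,v)`:
`∫_ℂ |f|² dμ ≤ C ‖a‖²_v` for every `f ∈ 𝓗(Γ,v)` with coefficients `a ∈ ℓ²_v`. -/
def IsCarleson (γ : ℕ → ℂ) (v : ℕ → ℝ) (μ : Measure ℂ) : Prop :=
  ∃ C : ℝ, 0 < C ∧ ∀ a : ℕ → ℂ, MemL2v v a →
    ∫⁻ z, (‖Hfun γ v a z‖₊ : ℝ≥0∞) ^ 2 ∂μ ≤ ENNReal.ofReal (C * normSqV v a)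

/-- The sequence `(a k)` of coefficient sequences converges weakly to zero in `ℓ²_v`:
it is norm bounded and `∑_n a^{(k)}_n v_n conj(b_n) → 0` for every `b ∈ ℓ²_v`. -/
def WeaklyNull (v : ℕ → ℝ) (a : ℕ → ℕ → ℂ) : Prop :=
  (∃ M : ℝ, ∀ k, normSqV v (a k) ≤ M) ∧
    ∀ b : ℕ → ℂ, MemL2v v b →
      Tendsto (fun k => ∑' n, a k n * (v n : ℂ) * (starRingEnd ℂ) (b n)) atTop (𝓝 0)

/-- `μ` is a compact (vanishing) Carleson measure for `𝓗(Γ,v)`: it is Carleson and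
`∫_ℂ |f_k|² dμ → 0` for every weakly null sequence in `𝓗(Γ,v)`. -/
def IsCompactCarleson (γ : ℕ → ℂ) (v : ℕ → ℝ) (μ : Measure ℂ) : Prop :=
  IsCarleson γ v μ ∧
    ∀ a : ℕ → ℕ → ℂ, (∀ k, MemL2v v (a k)) → WeaklyNull v a →
      Tendsto (fun k => ∫⁻ z, (‖Hfun γ v (a k) z‖₊ : ℝ≥0∞) ^ 2 ∂μ) atTop (𝓝 0)

/-- The local quantity `∫_{Ω_n} v_n/|z-γ_n|² dμ(z)`. -/
def localTerm (γ : ℕ → ℂ) (v : ℕ → ℝ) (μ : Measure ℂ) (n : ℕ) : ℝ≥0∞ :=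
  ∫⁻ z in Omega γ n, ENNReal.ofReal (v n / ‖z - γ n‖ ^ 2) ∂μ

/-- The global quantity
`(∑_{m=1}^n v_m)·(∑_{m=n+1}^∞ ∫_{Ω_m} |z|⁻² dμ) + (∑_{m=n+1}^∞ v_m/|γ_m|²)·(∑_{m=1}^n μ(Ω_m))`. -/
def globalTerm (γ : ℕ → ℂ) (v : ℕ → ℝ) (μ : Measure ℂ) (n : ℕ) : ℝ≥0∞ :=
  ENNReal.ofReal (∑ m ∈ Finset.range (n + 1), v m) *
      (∑' m : ℕ, ∫⁻ z in Omega γ (n + 1 + m), ENNReal.ofReal (1 / ‖z‖ ^ 2) ∂μ) +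
    ENNReal.ofReal (∑' m : ℕ, v (n + 1 + m) / ‖γ (n + 1 + m)‖ ^ 2) *
      (∑ m ∈ Finset.range (n + 1), μ (Omega γ m))

lemma re_half (z g : ℂ) (h : ‖g‖ < ‖z‖) : 1 / 2 ≤ (z / (z - g)).re := by
  have hne : z - g ≠ 0 := by
    intro h0
    rw [sub_eq_zero] at h0
    rw [h0] at h
    exact lt_irrefl _ h
  have hpos : 0 < Complex.normSq (z - g) := Complex.normSq_pos.2 hne
  have h2 : Complex.normSq g ≤ Complex.normSq z := by
    rw [Complex.normSq_eq_norm_sq, Complex.normSq_eq_norm_sq]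
    gcongr
  rw [Complex.div_re, ← add_div, le_div_iff₀ hpos]
  simp only [Complex.normSq_apply, Complex.sub_re, Complex.sub_im] at *
  nlinarith

/-- The boundary radii of the shells. -/
def Rad (γ : ℕ → ℂ) (n : ℕ) : ℝ := (‖γ n‖ + ‖γ (n + 1)‖) / 2

lemma rad_mono (γ : ℕ → ℂ) (h : Monotone fun n => ‖γ n‖) : Monotone (Rad γ) := by
  intro i j hij
  have h1 := h hij
  have h2 := h (Nat.succ_le_succ hij)
  simp only [Rad] at *
  simp only [Nat.succ_eq_add_one] at h2
  linarith

lemma omega_upper (γ : ℕ → ℂ) (n : ℕ) (z : ℂ) (h : z ∈ Omega γ n) : ‖z‖ < Rad γ n := by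
  cases n with
  | zero => exact h
  | succ n => exact h.2

lemma omega_lower (γ : ℕ → ℂ) (n : ℕ) (z : ℂ) (h : z ∈ Omega γ (n + 1)) : Rad γ n ≤ ‖z‖ := h.1

lemma omega_meas (γ : ℕ → ℂ) (n : ℕ) : MeasurableSet (Omega γ n) := by
  cases n with
  | zero => exact measurableSet_lt measurable_norm measurable_const
  | succ n =>
    exact (measurableSet_le measurable_const measurable_norm).inter
      (measurableSet_lt measurable_norm measurable_const)

lemma omega_disj (γ : ℕ → ℂ) (h : Monotone fun n => ‖γ n‖) :
    Pairwise (Function.onFun Disjoint (Omega γ)) := by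
  have key : ∀ i j, i < j → Disjoint (Omega γ i) (Omega γ j) := by
    intro i j hij
    rw [Set.disjoint_left]
    intro z hi hj
    obtain ⟨k, rfl⟩ : ∃ k, j = k + 1 := ⟨j - 1, by omega⟩
    have h1 := omega_upper γ i z hi
    have h2 := omega_lower γ k z hj
    have h3 := rad_mono γ h (show i ≤ k by omega)
    linarith
  intro i j hij
  rcases lt_or_gt_of_ne hij with h1 | h1
  · exact key i j h1
  · exact (key j i h1).symm

lemma tail_hasSum (g : ℕ → ℝ) (hg : Summable g) (n : ℕ) :
    HasSum (fun m => if n < m then g m else 0) (∑' m, g (n + 1 + m)) := by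
  rw [← hasSum_nat_add_iff' (n + 1)]
  have h0 : ∑ i ∈ Finset.range (n + 1), (if n < i then g i else 0) = 0 := by
    apply Finset.sum_eq_zero
    intro i hi
    rw [if_neg]
    have := Finset.mem_range.1 hi
    omega
  rw [h0, sub_zero]
  have h1 : (fun m => if n < m + (n + 1) then g (m + (n + 1)) else 0)
      = fun m => g (n + 1 + m) := by
    funext m
    rw [if_pos (by omega), add_comm]
  rw [h1]
  have h2 := (summable_nat_add_iff (n + 1)).2 hg
  simp only [add_comm _ (n + 1)] at h2
  exact h2.hasSum

lemma weaklyNull_of (v : ℕ → ℝ) (hv : ∀ n, 0 < v n) (a : ℕ → ℕ → ℂ) (M : ℝ)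
    (hmem : ∀ k, MemL2v v (a k)) (hM : ∀ k, normSqV v (a k) ≤ M)
    (hc : ∀ m, Tendsto (fun k => a k m) atTop (𝓝 0)) : WeaklyNull v a := by
  refine ⟨⟨M, hM⟩, ?_⟩
  intro b hb
  have hM0 : 0 ≤ M := le_trans (tsum_nonneg fun n => by have := hv n; positivity) (hM 0)
  have hbd : ∀ δ : ℝ, 0 < δ → ∀ k n, ‖a k n * (v n : ℂ) * (starRingEnd ℂ) (b n)‖ ≤
      δ * (‖a k n‖ ^ 2 * v n) + δ⁻¹ * (‖b n‖ ^ 2 * v n) := by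
    intro δ hδ k n
    rw [norm_mul, norm_mul, RCLike.norm_conj, Complex.norm_real, Real.norm_eq_abs,
      abs_of_pos (hv n)]
    have h1 : ‖a k n‖ * ‖b n‖ ≤ δ * ‖a k n‖ ^ 2 + δ⁻¹ * ‖b n‖ ^ 2 := by
      have h3 : 0 ≤ δ⁻¹ * (δ * ‖a k n‖ - ‖b n‖) ^ 2 := by positivity
      have h4 : δ⁻¹ * (δ * ‖a k n‖ - ‖b n‖) ^ 2
          = δ * ‖a k n‖ ^ 2 + δ⁻¹ * ‖b n‖ ^ 2 - 2 * (‖a k n‖ * ‖b n‖) := by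
        field_simp
        ring
      have h5 : 0 ≤ ‖a k n‖ * ‖b n‖ := by positivity
      linarith
    nlinarith [hv n]
  have hsum : ∀ k, Summable fun n => a k n * (v n : ℂ) * (starRingEnd ℂ) (b n) := by
    intro k
    exact Summable.of_norm_bounded (((hmem k).mul_left 1).add (hb.mul_left 1⁻¹)) (hbd 1 one_pos k)
  rw [Metric.tendsto_atTop]
  intro ε hε
  set δ : ℝ := ε / (3 * (M + 1)) with hδdef
  have hδ : 0 < δ := by positivity
  have hδM : δ * M < ε / 3 := by
    have : δ * (M + 1) = ε / 3 := by rw [hδdef]; field_simp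
    nlinarith
  have htail := tendsto_sum_nat_add (fun n => ‖b n‖ ^ 2 * v n)
  obtain ⟨N, hN⟩ := (htail.eventually (gt_mem_nhds (show (0:ℝ) < δ * (ε / 3) by positivity))).exists
  have hfin : Tendsto (fun k => ∑ n ∈ Finset.range N, a k n * (v n : ℂ) * (starRingEnd ℂ) (b n))
      atTop (𝓝 0) := by
    have h1 : Tendsto (fun k => ∑ n ∈ Finset.range N, a k n * (v n : ℂ) * (starRingEnd ℂ) (b n))
      atTop (𝓝 (∑ n ∈ Finset.range N, 0 * (v n : ℂ) * (starRingEnd ℂ) (b n))) :=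
      tendsto_finsetSum _ fun n _ => ((hc n).mul_const _).mul_const _
    simpa using h1
  obtain ⟨K, hK⟩ := (Metric.tendsto_atTop.1 hfin) (ε / 3) (by positivity)
  refine ⟨K, fun k hk => ?_⟩
  have hk1 := hK k hk
  rw [dist_zero_right] at hk1 ⊢
  rw [← (hsum k).sum_add_tsum_nat_add N]
  have hsa := (summable_nat_add_iff N).2 (hmem k)
  have hsb := (summable_nat_add_iff N).2 hb
  have h2 : ‖∑' n, a k (n + N) * (v (n + N) : ℂ) * (starRingEnd ℂ) (b (n + N))‖ ≤
      δ * (∑' n, ‖a k (n + N)‖ ^ 2 * v (n + N)) + δ⁻¹ * ∑' n, ‖b (n + N)‖ ^ 2 * v (n + N) := by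
    rw [← tsum_mul_left, ← tsum_mul_left, ← (hsa.mul_left δ).tsum_add (hsb.mul_left δ⁻¹)]
    exact tsum_of_norm_bounded ((hsa.mul_left δ).add (hsb.mul_left δ⁻¹)).hasSum
      fun n => hbd δ hδ k (n + N)
  have h3 : ∑' n, ‖a k (n + N)‖ ^ 2 * v (n + N) ≤ M := by
    refine le_trans ?_ (hM k)
    unfold normSqV
    rw [← (hmem k).sum_add_tsum_nat_add N]
    have : 0 ≤ ∑ n ∈ Finset.range N, ‖a k n‖ ^ 2 * v n :=
      Finset.sum_nonneg fun n _ => by have := hv n; positivity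
    linarith
  have h4 : δ⁻¹ * ∑' n, ‖b (n + N)‖ ^ 2 * v (n + N) < ε / 3 := by
    rw [inv_mul_lt_iff₀ hδ]
    exact hN
  have h5 : δ * (∑' n, ‖a k (n + N)‖ ^ 2 * v (n + N)) ≤ δ * M := by gcongr
  refine lt_of_le_of_lt (norm_add_le _ _) ?_
  linarith

lemma ennreal_norm_sq (w : ℂ) : (‖w‖₊ : ℝ≥0∞) ^ 2 = ENNReal.ofReal (‖w‖ ^ 2) := by
  rw [ENNReal.ofReal_pow (norm_nonneg _), ofReal_norm]
  rfl

/-- Normalised unit vectors. -/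
def aE (v : ℕ → ℝ) (n m : ℕ) : ℂ := if m = n then (((√(v n))⁻¹ : ℝ) : ℂ) else 0

lemma aE_hasSum (v : ℕ → ℝ) (hv : ∀ n, 0 < v n) (n : ℕ) :
    HasSum (fun m => ‖aE v n m‖ ^ 2 * v m) 1 := by
  have h := hasSum_single (f := fun m => ‖aE v n m‖ ^ 2 * v m) n
    (by intro m hm; simp [aE, hm])
  convert h using 1
  have := hv n
  simp only [aE, if_true, Complex.norm_real, Real.norm_eq_abs, sq_abs, inv_pow,
    Real.sq_sqrt this.le]
  field_simp

lemma aE_fun (γ : ℕ → ℂ) (v : ℕ → ℝ) (hv : ∀ n, 0 < v n) (n : ℕ) (z : ℂ) :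
    ‖Hfun γ v (aE v n) z‖ ^ 2 = v n / ‖z - γ n‖ ^ 2 := by
  unfold Hfun
  rw [tsum_eq_single n (by intro m hm; simp [aE, hm])]
  have := hv n
  simp only [aE, if_true, norm_div, norm_mul, Complex.norm_real, Real.norm_eq_abs, div_pow,
    mul_pow, sq_abs, inv_pow, Real.sq_sqrt this.le]
  congr 1
  field_simp

/-- Normalised initial segments. -/
def aL (v : ℕ → ℝ) (n m : ℕ) : ℂ :=
  if m < n + 1 then (((√(∑ m ∈ Finset.range (n + 1), v m))⁻¹ : ℝ) : ℂ) else 0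

lemma V_pos (v : ℕ → ℝ) (hv : ∀ n, 0 < v n) (n : ℕ) : 0 < ∑ m ∈ Finset.range (n + 1), v m :=
  Finset.sum_pos (fun i _ => hv i) ⟨0, by simp⟩

lemma aL_hasSum (v : ℕ → ℝ) (hv : ∀ n, 0 < v n) (n : ℕ) :
    HasSum (fun m => ‖aL v n m‖ ^ 2 * v m) 1 := by
  have h : HasSum (fun m => ‖aL v n m‖ ^ 2 * v m)
      (∑ m ∈ Finset.range (n + 1), ‖aL v n m‖ ^ 2 * v m) := hasSum_sum_of_ne_finset_zero
    (by intro m hm; rw [Finset.mem_range] at hm; simp [aL, hm])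
  convert h using 1
  have hV := V_pos v hv n
  have h2 : ∀ m ∈ Finset.range (n + 1), ‖aL v n m‖ ^ 2 * v m =
      (∑ m ∈ Finset.range (n + 1), v m)⁻¹ * v m := by
    intro m hm
    rw [Finset.mem_range] at hm
    simp only [aL, if_pos hm, Complex.norm_real, Real.norm_eq_abs, sq_abs, inv_pow,
      Real.sq_sqrt hV.le]
  rw [Finset.sum_congr rfl h2, ← Finset.mul_sum, inv_mul_cancel₀ hV.ne']

lemma aL_fun (γ : ℕ → ℂ) (v : ℕ → ℝ) (hv : ∀ n, 0 < v n)
    (hmono : Monotone fun n => ‖γ n‖) (n : ℕ) (z : ℂ) (hz : ‖γ n‖ < ‖z‖) :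
    (∑ m ∈ Finset.range (n + 1), v m) / ‖z‖ ^ 2 ≤ 4 * ‖Hfun γ v (aL v n) z‖ ^ 2 := by
  have hV := V_pos v hv n
  set V := ∑ m ∈ Finset.range (n + 1), v m with hVdef
  have hz0 : 0 < ‖z‖ := (norm_nonneg _).trans_lt hz
  have h1 : z * Hfun γ v (aL v n) z =
      ∑ m ∈ Finset.range (n + 1), (((√V)⁻¹ * v m : ℝ) : ℂ) * (z / (z - γ m)) := by
    unfold Hfun
    rw [tsum_eq_sum (s := Finset.range (n + 1))
      (by intro m hm; rw [Finset.mem_range] at hm; simp [aL, hm]), Finset.mul_sum]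
    refine Finset.sum_congr rfl fun m hm => ?_
    rw [Finset.mem_range] at hm
    simp only [aL, if_pos hm, ← hVdef]
    push_cast
    ring
  have h2 : √V / 2 ≤ (z * Hfun γ v (aL v n) z).re := by
    rw [h1, Complex.re_sum]
    have h3 : ∑ m ∈ Finset.range (n + 1), (√V)⁻¹ * v m * (1 / 2) = √V / 2 := by
      rw [← Finset.sum_mul, ← Finset.mul_sum, ← hVdef]
      have : V = √V * √V := (Real.mul_self_sqrt hV.le).symm
      have h0 : √V ≠ 0 := (Real.sqrt_pos.2 hV).ne'
      field_simp
      rw [Real.sq_sqrt hV.le]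
    rw [← h3]
    refine Finset.sum_le_sum fun m hm => ?_
    rw [Complex.re_ofReal_mul]
    have := hv m
    rw [Finset.mem_range] at hm
    have h5 := hmono (show m ≤ n by omega)
    have := re_half z (γ m) (lt_of_le_of_lt h5 hz)
    gcongr
  have h4 := h2.trans (Complex.re_le_norm _)
  rw [norm_mul] at h4
  rw [div_le_iff₀ (by positivity)]
  have h6 : (√V / 2) ^ 2 ≤ (‖z‖ * ‖Hfun γ v (aL v n) z‖) ^ 2 := by gcongr
  rw [div_pow, Real.sq_sqrt hV.le] at h6
  nlinarith

/-- The weights `v_m / |γ_m|^2`. -/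
def wt (γ : ℕ → ℂ) (v : ℕ → ℝ) (m : ℕ) : ℝ := v m / ‖γ m‖ ^ 2

/-- Tail sums of the weights. -/
def Wt (γ : ℕ → ℂ) (v : ℕ → ℝ) (n : ℕ) : ℝ := ∑' m : ℕ, wt γ v (n + 1 + m)

lemma wt_summable (γ : ℕ → ℂ) (v : ℕ → ℝ) (hne : ∀ n, γ n ≠ 0) (hv : ∀ n, 0 < v n)
    (hmono : Monotone fun n => ‖γ n‖) (hadm : Admissible γ v) : Summable (wt γ v) := by
  refine Summable.of_nonneg_of_le (fun n => ?_) (fun n => ?_)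
    (hadm.mul_left (1 + 1 / ‖γ 0‖ ^ 2))
  · have := hv n
    unfold wt
    positivity
  · have h0 := norm_pos_iff.2 (hne 0)
    have hn := norm_pos_iff.2 (hne n)
    have h1 : ‖γ 0‖ ≤ ‖γ n‖ := hmono (Nat.zero_le n)
    have := hv n
    unfold wt
    rw [mul_div_assoc', div_le_div_iff₀ (by positivity) (by positivity)]
    have h2 : 1 ≤ 1 / ‖γ 0‖ ^ 2 * ‖γ n‖ ^ 2 := by
      rw [one_div, le_inv_mul_iff₀ (by positivity), mul_one]
      gcongr
    nlinarith

lemma Wt_pos (γ : ℕ → ℂ) (v : ℕ → ℝ) (hne : ∀ n, γ n ≠ 0) (hv : ∀ n, 0 < v n)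
    (hs : Summable (wt γ v)) (n : ℕ) : 0 < Wt γ v n := by
  have hp : ∀ m, 0 < wt γ v m := fun m => by
    have := hv m
    have := norm_pos_iff.2 (hne m)
    unfold wt
    positivity
  have h2 := (summable_nat_add_iff (n + 1)).2 hs
  simp only [add_comm _ (n + 1)] at h2
  exact h2.tsum_pos (fun m => (hp _).le) 0 (hp _)

/-- Normalised tails. -/
def aR (γ : ℕ → ℂ) (v : ℕ → ℝ) (n m : ℕ) : ℂ :=
  if n < m then (((√(Wt γ v n))⁻¹ : ℝ) : ℂ) * ((starRingEnd ℂ) (γ m))⁻¹ else 0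

lemma aR_hasSum (γ : ℕ → ℂ) (v : ℕ → ℝ) (hne : ∀ n, γ n ≠ 0) (hv : ∀ n, 0 < v n)
    (hs : Summable (wt γ v)) (n : ℕ) :
    HasSum (fun m => ‖aR γ v n m‖ ^ 2 * v m) 1 := by
  have hW := Wt_pos γ v hne hv hs n
  have h := (tail_hasSum (wt γ v) hs n).mul_left (Wt γ v n)⁻¹
  change HasSum _ ((Wt γ v n)⁻¹ * Wt γ v n) at h
  rw [inv_mul_cancel₀ hW.ne'] at h
  convert h using 1
  funext m
  unfold aR
  split_ifs with hm
  · rw [norm_mul, norm_inv, RCLike.norm_conj, Complex.norm_real, Real.norm_eq_abs, mul_pow,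
      sq_abs, inv_pow, Real.sq_sqrt hW.le]
    unfold wt
    ring
  · simp

lemma aR_fun (γ : ℕ → ℂ) (v : ℕ → ℝ) (hne : ∀ n, γ n ≠ 0) (hv : ∀ n, 0 < v n)
    (hmono : Monotone fun n => ‖γ n‖) (hs : Summable (wt γ v)) (n : ℕ) (z : ℂ)
    (hz : ‖z‖ < ‖γ (n + 1)‖) :
    Wt γ v n ≤ 4 * ‖Hfun γ v (aR γ v n) z‖ ^ 2 := by
  have hW := Wt_pos γ v hne hv hs n
  set W := Wt γ v n with hWdef
  have hg1 := norm_pos_iff.2 (hne (n + 1))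
  have hwp : ∀ m, 0 ≤ wt γ v m := fun m => by
    have := hv m
    unfold wt
    positivity
  -- the terms
  let F : ℕ → ℂ := fun m => if n < m then (((√W)⁻¹ * wt γ v m : ℝ) : ℂ) * (γ m / (γ m - z)) else 0
  have hF : ∀ m, aR γ v n m * (v m : ℂ) / (z - γ m) = - F m := by
    intro m
    simp only [F, aR, ← hWdef]
    split_ifs with hm
    · have hz' : z - γ m ≠ 0 := by
        intro h0
        rw [sub_eq_zero] at h0
        have h1 : ‖γ (n + 1)‖ ≤ ‖γ m‖ := hmono (show n + 1 ≤ m by omega)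
        rw [← h0] at h1
        linarith
      have hz2 : γ m - z ≠ 0 := by
        rw [← neg_sub]
        exact neg_ne_zero.2 hz'
      have hc : (starRingEnd ℂ) (γ m) ≠ 0 := by simpa using hne m
      have hk : ((‖γ m‖ : ℝ) : ℂ) ^ 2 = γ m * (starRingEnd ℂ) (γ m) := (Complex.mul_conj' _).symm
      have hg := hne m
      unfold wt
      push_cast
      rw [hk, ← neg_sub (γ m) z]
      field_simp
    · simp
  have hre : ∀ m, (√W)⁻¹ * (if n < m then wt γ v m else 0) * (1 / 2) ≤ (F m).re := by
    intro m
    simp only [F]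
    split_ifs with hm
    · rw [Complex.re_ofReal_mul]
      have h1 : ‖γ (n + 1)‖ ≤ ‖γ m‖ := hmono (show n + 1 ≤ m by omega)
      have := re_half (γ m) z (hz.trans_le h1)
      have := hwp m
      gcongr
    · simp
  have hsum : Summable F := by
    have ht := (tail_hasSum (wt γ v) hs n).summable
    refine Summable.of_norm_bounded
      ((ht.mul_left (√W)⁻¹).mul_right (1 / (1 - ‖z‖ / ‖γ (n + 1)‖))) ?_
    intro m
    have hq : 0 < 1 - ‖z‖ / ‖γ (n + 1)‖ := by
      rw [sub_pos, div_lt_one hg1]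
      exact hz
    simp only [F]
    split_ifs with hm
    · have h1 : ‖γ (n + 1)‖ ≤ ‖γ m‖ := hmono (show n + 1 ≤ m by omega)
      have h2 : ‖γ m‖ - ‖z‖ ≤ ‖γ m - z‖ := norm_sub_norm_le _ _
      have h3 : 0 < ‖γ m - z‖ := by linarith
      have h4 := hwp m
      rw [norm_mul, Complex.norm_real, Real.norm_eq_abs, abs_of_nonneg (by positivity), norm_div]
      refine mul_le_mul_of_nonneg_left ?_ (by positivity)
      rw [div_le_div_iff₀ h3 hq, one_mul]
      refine le_trans ?_ h2
      rw [mul_sub, mul_one]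
      have : ‖z‖ ≤ ‖γ m‖ * (‖z‖ / ‖γ (n + 1)‖) := by
        rw [mul_div_assoc', le_div_iff₀ hg1, mul_comm]
        gcongr
      linarith
    · simp
  have hH : Hfun γ v (aR γ v n) z = - ∑' m, F m := by
    unfold Hfun
    rw [tsum_congr hF, tsum_neg]
  have h2 : √W / 2 ≤ (∑' m, F m).re := by
    have ha := (((tail_hasSum (wt γ v) hs n).mul_left (√W)⁻¹).mul_right (1 / 2))
    have hb := Complex.hasSum_re hsum.hasSum
    have hab := hasSum_le hre ha hb
    change (√W)⁻¹ * W * (1 / 2) ≤ _ at hab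
    have h0 : √W ≠ 0 := (Real.sqrt_pos.2 hW).ne'
    have h3 : (√W)⁻¹ * W * (1 / 2) = √W / 2 := by
      field_simp
      rw [Real.sq_sqrt hW.le]
    linarith
  have h4 := h2.trans (Complex.re_le_norm _)
  rw [hH, norm_neg]
  have h6 : (√W / 2) ^ 2 ≤ ‖∑' m, F m‖ ^ 2 := by gcongr
  rw [div_pow, Real.sq_sqrt hW.le] at h6
  linarith

/-- The tail integrals. -/
def Tt (γ : ℕ → ℂ) (μ : Measure ℂ) (n : ℕ) : ℝ≥0∞ :=
  ∑' m : ℕ, ∫⁻ z in Omega γ (n + 1 + m), ENNReal.ofReal (1 / ‖z‖ ^ 2) ∂μ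

lemma first_bound (γ : ℕ → ℂ) (v : ℕ → ℝ) (hv : ∀ n, 0 < v n)
    (hmono : Monotone fun n => ‖γ n‖) (hlt : ∀ n, ‖γ n‖ < Rad γ n) (μ : Measure ℂ) (n : ℕ) :
    ENNReal.ofReal (∑ m ∈ Finset.range (n + 1), v m) * Tt γ μ n ≤
      4 * ∫⁻ z, (‖Hfun γ v (aL v n) z‖₊ : ℝ≥0∞) ^ 2 ∂μ := by
  have hU : MeasurableSet (⋃ m, Omega γ (n + 1 + m)) :=
    MeasurableSet.iUnion fun m => omega_meas γ _
  unfold Tt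
  rw [← lintegral_iUnion (fun m => omega_meas γ (n + 1 + m))
    (fun i j hij => omega_disj γ hmono (by omega)),
    ← lintegral_const_mul' _ _ ENNReal.ofReal_ne_top, ← lintegral_const_mul' _ _ (by simp)]
  refine le_trans (setLIntegral_mono' hU ?_) (setLIntegral_le_lintegral _ _)
  intro z hz
  obtain ⟨m, hm⟩ := Set.mem_iUnion.1 hz
  rw [show n + 1 + m = (n + m) + 1 by omega] at hm
  have h1 := omega_lower γ _ z hm
  have h2 := rad_mono γ hmono (show n ≤ n + m by omega)
  have h3 := aL_fun γ v hv hmono n z (by linarith [hlt n])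
  rw [ennreal_norm_sq, ← ENNReal.ofReal_mul (V_pos v hv n).le,
    show (4 : ℝ≥0∞) = ENNReal.ofReal 4 by simp, ← ENNReal.ofReal_mul (by norm_num)]
  apply ENNReal.ofReal_le_ofReal
  rw [mul_one_div]
  exact h3

lemma second_bound (γ : ℕ → ℂ) (v : ℕ → ℝ) (hne : ∀ n, γ n ≠ 0) (hv : ∀ n, 0 < v n)
    (hmono : Monotone fun n => ‖γ n‖) (hlt : ∀ n, Rad γ n < ‖γ (n + 1)‖)
    (hs : Summable (wt γ v)) (μ : Measure ℂ) (n : ℕ) :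
    ENNReal.ofReal (Wt γ v n) * (∑ m ∈ Finset.range (n + 1), μ (Omega γ m)) ≤
      4 * ∫⁻ z, (‖Hfun γ v (aR γ v n) z‖₊ : ℝ≥0∞) ^ 2 ∂μ := by
  have hU : MeasurableSet (⋃ m ∈ Finset.range (n + 1), Omega γ m) :=
    Finset.measurableSet_biUnion _ fun m _ => omega_meas γ _
  rw [← measure_biUnion_finset (fun i _ j _ hij => omega_disj γ hmono hij)
    (fun m _ => omega_meas γ m), ← setLIntegral_const, ← lintegral_const_mul' _ _ (by simp)]
  refine le_trans (setLIntegral_mono' hU ?_) (setLIntegral_le_lintegral _ _)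
  intro z hz
  simp only [Set.mem_iUnion, Finset.mem_range] at hz
  obtain ⟨m, hm, hzm⟩ := hz
  have h1 := omega_upper γ _ z hzm
  have h2 := rad_mono γ hmono (show m ≤ n by omega)
  have h3 := aR_fun γ v hne hv hmono hs n z (by linarith [hlt n])
  rw [ennreal_norm_sq, show (4 : ℝ≥0∞) = ENNReal.ofReal 4 by simp,
    ← ENNReal.ofReal_mul (by norm_num)]
  exact ENNReal.ofReal_le_ofReal h3

lemma four_mul_tendsto (u : ℕ → ℝ≥0∞) (h : Tendsto u atTop (𝓝 0)) :
    Tendsto (fun n => 4 * u n) atTop (𝓝 0) := by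
  have := ENNReal.Tendsto.const_mul (a := 4) h (Or.inr (by simp))
  simpa using this

lemma first_tendsto (γ : ℕ → ℂ) (v : ℕ → ℝ) (hv : ∀ n, 0 < v n)
    (hmono : Monotone fun n => ‖γ n‖) (hlt : ∀ n, ‖γ n‖ < Rad γ n) (μ : Measure ℂ)
    (hcompact : IsCompactCarleson γ v μ) :
    Tendsto (fun n => ENNReal.ofReal (∑ m ∈ Finset.range (n + 1), v m) * Tt γ μ n)
      atTop (𝓝 0) := by
  have hmem : ∀ k, MemL2v v (aL v k) := fun k => (aL_hasSum v hv k).summable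
  by_cases hsv : Summable v
  · -- bounded case
    obtain ⟨⟨C, hC, hCar⟩, -⟩ := hcompact
    have hfin : Tt γ μ 0 ≠ ⊤ := by
      have h1 := first_bound γ v hv hmono hlt μ 0
      have h2 : (4 : ℝ≥0∞) * ∫⁻ z, (‖Hfun γ v (aL v 0) z‖₊ : ℝ≥0∞) ^ 2 ∂μ < ⊤ :=
        ENNReal.mul_lt_top (by simp) ((hCar _ (hmem 0)).trans_lt ENNReal.ofReal_lt_top)
      have h3 := h1.trans_lt h2
      intro h4
      rw [h4, ENNReal.mul_top] at h3
      · exact lt_irrefl _ h3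
      · have := V_pos v hv 0
        simpa using this
    have hT : Tendsto (fun n => Tt γ μ n) atTop (𝓝 0) := by
      have h5 := ENNReal.tendsto_sum_nat_add
        (fun m => ∫⁻ z in Omega γ (0 + 1 + m), ENNReal.ofReal (1 / ‖z‖ ^ 2) ∂μ) hfin
      refine h5.congr fun n => ?_
      unfold Tt
      refine tsum_congr fun m => ?_
      rw [show 0 + 1 + (m + n) = n + 1 + m by omega]
    have hT2 := ENNReal.Tendsto.const_mul (a := ENNReal.ofReal (∑' m, v m)) hT
      (Or.inr ENNReal.ofReal_ne_top)
    rw [mul_zero] at hT2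
    refine tendsto_of_tendsto_of_tendsto_of_le_of_le tendsto_const_nhds hT2
      (fun _ => zero_le) fun n => ?_
    dsimp only
    gcongr
    exact hsv.sum_le_tsum _ fun i _ => (hv i).le
  · have hV : Tendsto (fun n => ∑ m ∈ Finset.range (n + 1), v m) atTop atTop :=
      ((not_summable_iff_tendsto_nat_atTop_of_nonneg fun n => (hv n).le).1 hsv).comp
        (tendsto_add_atTop_nat 1)
    have hwn : WeaklyNull v (aL v) := by
      refine weaklyNull_of v hv _ 1 hmem (fun k => (aL_hasSum v hv k).tsum_eq.le) fun m => ?_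
      have h1 : Tendsto (fun n => (((√(∑ m ∈ Finset.range (n + 1), v m))⁻¹ : ℝ) : ℂ))
          atTop (𝓝 0) := by
        have := (Complex.continuous_ofReal.tendsto 0).comp
          (tendsto_inv_atTop_zero.comp (Real.tendsto_sqrt_atTop.comp hV))
        simpa [Function.comp_def] using this
      refine h1.congr' ?_
      filter_upwards [eventually_ge_atTop m] with n hn
      simp only [aL]
      rw [if_pos (by omega)]
    exact tendsto_of_tendsto_of_tendsto_of_le_of_le tendsto_const_nhds
      (four_mul_tendsto _ (hcompact.2 _ hmem hwn)) (fun _ => zero_le)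
      fun n => first_bound γ v hv hmono hlt μ n

/-- Necessity in the main theorem: if `μ` is a compact Carleson measure for `𝓗(Γ,v)`,
then `∫_{Ω_n} v_n/|z-γ_n|² dμ → 0` and
`(∑_{m=1}^n v_m)(∑_{m=n+1}^∞ ∫_{Ω_m}|z|⁻²dμ) + (∑_{m=n+1}^∞ v_m/|γ_m|²)(∑_{m=1}^n μ(Ω_m)) → 0`. -/
theorem compactCarleson_necessary (γ : ℕ → ℂ) (v : ℕ → ℝ)
    (hγ_inj : Function.Injective γ) (hγ_ne : ∀ n, γ n ≠ 0)
    (hγ_mono : Monotone fun n => ‖γ n‖) (hγ_sparse : Sparse γ)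
    (hv : ∀ n, 0 < v n) (hadm : Admissible γ v)
    (μ : Measure ℂ) (hμΓ : μ (Set.range γ) = 0)
    (hcompact : IsCompactCarleson γ v μ) :
    Tendsto (fun n => localTerm γ v μ n) atTop (𝓝 0) ∧
      Tendsto (fun n => globalTerm γ v μ n) atTop (𝓝 0) := by
  obtain ⟨c, hc1, hc⟩ := hγ_sparse
  have hlt : ∀ n, ‖γ n‖ < ‖γ (n + 1)‖ := by
    intro n
    have h1 := norm_pos_iff.2 (hγ_ne n)
    have h2 := hc n
    nlinarith
  have hs := wt_summable γ v hγ_ne hv hγ_mono hadm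
  refine ⟨?_, ?_⟩
  · have hmem : ∀ k, MemL2v v (aE v k) := fun k => (aE_hasSum v hv k).summable
    have hwn : WeaklyNull v (aE v) := by
      refine weaklyNull_of v hv _ 1 hmem (fun k => (aE_hasSum v hv k).tsum_eq.le) fun m => ?_
      refine tendsto_const_nhds.congr' ?_
      filter_upwards [eventually_gt_atTop m] with n hn
      simp only [aE]
      rw [if_neg (by omega)]
    refine tendsto_of_tendsto_of_tendsto_of_le_of_le tendsto_const_nhds
      (hcompact.2 _ hmem hwn) (fun _ => zero_le) fun n => ?_
    unfold localTerm
    refine le_trans (setLIntegral_le_lintegral _ _) (lintegral_mono fun z => ?_)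
    rw [ennreal_norm_sq, aE_fun γ v hv]
  · have h1 := first_tendsto γ v hv hγ_mono
      (fun n => by have := hlt n; unfold Rad; linarith) μ hcompact
    have hmem : ∀ k, MemL2v v (aR γ v k) := fun k => (aR_hasSum γ v hγ_ne hv hs k).summable
    have hwn : WeaklyNull v (aR γ v) := by
      refine weaklyNull_of v hv _ 1 hmem
        (fun k => (aR_hasSum γ v hγ_ne hv hs k).tsum_eq.le) fun m => ?_
      refine tendsto_const_nhds.congr' ?_
      filter_upwards [eventually_ge_atTop m] with n hn
      simp only [aR]
      rw [if_neg (by omega)]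
    have h2 : Tendsto (fun n => ENNReal.ofReal (Wt γ v n) *
        (∑ m ∈ Finset.range (n + 1), μ (Omega γ m))) atTop (𝓝 0) :=
      tendsto_of_tendsto_of_tendsto_of_le_of_le tendsto_const_nhds
        (four_mul_tendsto _ (hcompact.2 _ hmem hwn)) (fun _ => zero_le)
        fun n => second_bound γ v hγ_ne hv hγ_mono
          (fun n => by have := hlt n; unfold Rad; linarith) hs μ n
    have h3 := h1.add h2
    rw [add_zero] at h3
    exact h3
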